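/- arXiv:2003.03297 — 4 statements merged into one kernel-verified Lean document; each statement's English description precedes it below -/
import Mathlib

section
/- Let I be a nonempty finite index set and let p : I → ℝ be a probability vector, i.e., p(i) ≥ 0 for all i and ∑_{i∈I} p(i) = 1. Let Γ denote the number of indices i with p(i) ≠ 0 (the support size of p). Then 0 ≤ ∑_{i∈I} √(p(i)(1 − p(i))) ≤ √(Γ − 1); in particular ∑_{i∈I} √(p(i)(1 − p(i))) ≤ √(|I| − 1). -/
open Finset

/-!
Indices outside the support contribute nothing, so the sum runs over the support `S`, where
Cauchy–Schwarz gives `∑ √(p i) √(1 - p i) ≤ √(∑ p i) √(∑ (1 - p i)) = √1 √(Γ - 1)`.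
The second bound follows from `Γ ≤ |I|`.
-/

/-- For a probability vector `p` on a nonempty finite index set `I`, the sum
`∑ i, √(p i (1 - p i))` is nonnegative, bounded by `√(Γ - 1)` where `Γ` is the
support size of `p`, and in particular bounded by `√(|I| - 1)`. -/
theorem transitional_noise_bounds {I : Type*} [Fintype I] [Nonempty I]
    (p : I → ℝ) (hp : ∀ i, 0 ≤ p i) (hsum : ∑ i, p i = 1) :
    0 ≤ ∑ i, Real.sqrt (p i * (1 - p i)) ∧
    (∑ i, Real.sqrt (p i * (1 - p i)) ≤
      Real.sqrt (((Finset.univ.filter (fun i => p i ≠ 0)).card : ℝ) - 1)) ∧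
    (∑ i, Real.sqrt (p i * (1 - p i)) ≤ Real.sqrt ((Fintype.card I : ℝ) - 1)) := by
  have hle : ∀ i, p i ≤ 1 := fun i =>
    hsum ▸ Finset.single_le_sum (fun j _ => hp j) (Finset.mem_univ i)
  have key : ∑ i, Real.sqrt (p i * (1 - p i)) ≤
      Real.sqrt (((Finset.univ.filter (fun i => p i ≠ 0)).card : ℝ) - 1) := by
    set S := Finset.univ.filter (fun i => p i ≠ 0) with hS
    have hzero : ∀ i, i ∉ S → p i = 0 := fun i hi => by simpa [hS] using hi
    have hsumS : ∑ i ∈ S, p i = 1 := by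
      rw [← hsum]
      exact Finset.sum_subset (Finset.subset_univ S) fun i _ hi => hzero i hi
    calc ∑ i, Real.sqrt (p i * (1 - p i))
        = ∑ i ∈ S, Real.sqrt (p i * (1 - p i)) := by
          symm
          exact Finset.sum_subset (Finset.subset_univ S) fun i _ hi => by simp [hzero i hi]
      _ = ∑ i ∈ S, Real.sqrt (p i) * Real.sqrt (1 - p i) :=
          Finset.sum_congr rfl fun i _ => Real.sqrt_mul (hp i) _
      _ ≤ Real.sqrt (∑ i ∈ S, p i) * Real.sqrt (∑ i ∈ S, (1 - p i)) :=
          Real.sum_sqrt_mul_sqrt_le S hp fun i => sub_nonneg.2 (hle i)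
      _ = Real.sqrt ((S.card : ℝ) - 1) := by
          rw [Finset.sum_sub_distrib, hsumS]
          simp
  refine ⟨Finset.sum_nonneg fun i _ => Real.sqrt_nonneg _, key, key.trans ?_⟩
  apply Real.sqrt_le_sqrt
  gcongr
  exact Finset.card_le_univ _
end

section
/- Let I be a nonempty finite index set. For all x, y : I → ℝ, LSE(y) ≤ LSE(x) + ∑_{i∈I} σ_i(x)·(y(i) − x(i)) + (1/2)·(max_{i∈I} |y(i) − x(i)|)², where σ_i(x) := exp(x(i)) / ∑_{j∈I} exp(x(j)) is the i-th component of the gradient of LSE at x. That is, LSE is 1-smooth with respect to the ℓ∞-norm. -/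
/-!
With `p i = exp (x i) / ∑ j, exp (x j)` a probability vector and `d = y - x`, one has
`LSE(y) - LSE(x) = log (∑ i, p i * exp (d i))`. This is the log-moment generating function, at
parameter `1`, of the random variable `d` under the law `p`. Its values lie in `[-D, D]` with
`D = max |d i|`, so Hoeffding's lemma bounds it by the mean `∑ i, p i * d i` plus
`(2 * D) ^ 2 / 8 = D ^ 2 / 2`.
-/

open Finset

open MeasureTheory ProbabilityTheory in
/-- Hoeffding's lemma for a finitely supported law `p` and values in `[-D, D]`. -/
lemma sum_mul_exp_le_of_abs_le {I : Type*} [Fintype I] (p d : I → ℝ) (D : ℝ)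
    (hp : ∀ i, 0 ≤ p i) (hp1 : ∑ i, p i = 1) (hd : ∀ i, |d i| ≤ D) :
    ∑ i, p i * Real.exp (d i) ≤ Real.exp (∑ i, p i * d i + 1 / 2 * D ^ 2) := by
  let _ : MeasurableSpace I := ⊤
  set μ : Measure I := ∑ i, ENNReal.ofReal (p i) • Measure.dirac i with hμ
  have hprob : IsProbabilityMeasure μ := by
    constructor
    simp only [hμ, Measure.coe_finsetSum, Finset.sum_apply, Measure.smul_apply, measure_univ,
      smul_eq_mul, mul_one]
    rw [← ENNReal.ofReal_sum_of_nonneg fun i _ => hp i, hp1, ENNReal.ofReal_one]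
  have hint (f : I → ℝ) : ∫ i, f i ∂μ = ∑ i, p i * f i := by
    rw [hμ, integral_finsetSum_measure fun i _ =>
      (integrable_dirac (by simp)).smul_measure ENNReal.ofReal_ne_top]
    simp [integral_smul_measure, ENNReal.toReal_ofReal (hp _)]
  have h := (hasSubgaussianMGF_of_mem_Icc (μ := μ) (X := d) (a := -D) (b := D)
    (measurable_from_top.aemeasurable)
    (Filter.Eventually.of_forall fun i => abs_le.mp (hd i))).mgf_le 1
  have hc : (((‖D - -D‖₊ / 2) ^ 2 : NNReal) : ℝ) = D ^ 2 := by
    push_cast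
    rw [div_pow, Real.norm_eq_abs, sq_abs]
    ring
  rw [hc, mgf, hint, hint] at h
  simp only [one_mul, Real.exp_sub, ← mul_div_assoc] at h
  rw [← Finset.sum_div, div_le_iff₀ (Real.exp_pos _), ← Real.exp_add] at h
  refine h.trans_eq ?_
  ring_nf

/-- LogSumExp is 1-smooth w.r.t. the ℓ∞-norm: for all `x, y : I → ℝ`,
`LSE(y) ≤ LSE(x) + ⟪σ(x), y - x⟫ + (1/2) (max_i |y i - x i|)²`, where
`σ_i(x) = exp (x i) / ∑ j, exp (x j)` is the gradient of LSE at `x`. -/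
theorem logSumExp_one_smooth_linfty {I : Type*} [Fintype I] [Nonempty I]
    (x y : I → ℝ) :
    Real.log (∑ i, Real.exp (y i)) ≤
      Real.log (∑ i, Real.exp (x i))
        + ∑ i, (Real.exp (x i) / ∑ j, Real.exp (x j)) * (y i - x i)
        + (1 / 2) * (Finset.univ.sup' Finset.univ_nonempty (fun i => |y i - x i|)) ^ 2 := by
  have hpos (z : I → ℝ) : 0 < ∑ i, Real.exp (z i) :=
    Finset.sum_pos (fun i _ => Real.exp_pos _) Finset.univ_nonempty
  have h := sum_mul_exp_le_of_abs_le (fun i => Real.exp (x i) / ∑ j, Real.exp (x j))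
    (fun i => y i - x i) (Finset.univ.sup' Finset.univ_nonempty (fun i => |y i - x i|))
    (fun i => div_nonneg (Real.exp_pos _).le (hpos x).le)
    (by rw [← Finset.sum_div, div_self (hpos x).ne'])
    (fun i => Finset.le_sup' (fun i => |y i - x i|) (Finset.mem_univ i))
  have hratio : ∑ i, (Real.exp (x i) / ∑ j, Real.exp (x j)) * Real.exp (y i - x i)
      = (∑ i, Real.exp (y i)) / ∑ j, Real.exp (x j) := by
    rw [Finset.sum_div]
    refine Finset.sum_congr rfl fun i _ => ?_
    rw [div_mul_eq_mul_div, ← Real.exp_add, add_sub_cancel]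
  rw [hratio, ← Real.log_le_iff_le_exp (div_pos (hpos y) (hpos x)),
    Real.log_div (hpos y).ne' (hpos x).ne'] at h
  linarith
end

section
/- Fix w ≥ 0 and μ > 0 and let φ'(t) := −w·(log(t + μ) + t/(t + μ)) be the derivative of the single-coordinate term φ(t) = w·t·log(1/(t + μ)) of the smoothed weighted entropy. Then for all s, t ≥ 0, |φ'(s) − φ'(t)| ≤ (2w/μ)·|s − t|. In particular, since the Hessian of H_{w,μ} is diagonal, the gradient of H_{w,μ} is coordinatewise Lipschitz with constant 2·max_i w(i)/μ on the nonnegative orthant, i.e., H_{w,μ} is (2W/μ)-smooth with W := max_i w(i). -/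
/-!
The function `g t = log (t + μ) + t / (t + μ)` is increasing on `[0, ∞)`, and each of its two
summands is `1/μ`-Lipschitz there. For `0 ≤ s ≤ t`, the inequality `log x ≤ x - 1` at
`x = (t + μ) / (s + μ)` bounds the logarithmic increment by `(t - s) / (s + μ) ≤ (t - s) / μ`, and
the rational increment equals `μ (t - s) / ((t + μ) (s + μ)) ≤ (t - s) / μ`. Hence `g` is
`2/μ`-Lipschitz; scaling by the weight, and bounding it by the largest one, gives both claims.
-/

open Finset

theorem log_add_div_increment {μ s t : ℝ} (hμ : 0 < μ) (hs : 0 ≤ s) (hst : s ≤ t) :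
    0 ≤ (Real.log (t + μ) + t / (t + μ)) - (Real.log (s + μ) + s / (s + μ)) ∧
    (Real.log (t + μ) + t / (t + μ)) - (Real.log (s + μ) + s / (s + μ)) ≤ 2 / μ * (t - s) := by
  have hsμ : 0 < s + μ := by linarith
  have htμ : 0 < t + μ := by linarith
  have hd : 0 ≤ t - s := by linarith
  have hlog0 : Real.log (s + μ) ≤ Real.log (t + μ) := Real.log_le_log hsμ (by linarith)
  have hlog1 : Real.log (t + μ) - Real.log (s + μ) ≤ (t - s) / μ := by
    rw [← Real.log_div htμ.ne' hsμ.ne']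
    calc Real.log ((t + μ) / (s + μ)) ≤ (t + μ) / (s + μ) - 1 :=
          Real.log_le_sub_one_of_pos (div_pos htμ hsμ)
      _ = (t - s) / (s + μ) := by field_simp; ring
      _ ≤ (t - s) / μ := div_le_div_of_nonneg_left hd hμ (by linarith)
  have hrat : t / (t + μ) - s / (s + μ) = μ * (t - s) / ((t + μ) * (s + μ)) := by
    field_simp; ring
  have hrat0 : 0 ≤ μ * (t - s) / ((t + μ) * (s + μ)) := by positivity
  have hrat1 : μ * (t - s) / ((t + μ) * (s + μ)) ≤ (t - s) / μ := by
    calc μ * (t - s) / ((t + μ) * (s + μ)) ≤ μ * (t - s) / (μ * μ) := by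
          gcongr <;> linarith
      _ = (t - s) / μ := by field_simp
  have htwo : 2 / μ * (t - s) = (t - s) / μ + (t - s) / μ := by ring
  constructor <;> linarith

theorem abs_log_add_div_sub_le {μ s t : ℝ} (hμ : 0 < μ) (hs : 0 ≤ s) (ht : 0 ≤ t) :
    |(Real.log (s + μ) + s / (s + μ)) - (Real.log (t + μ) + t / (t + μ))|
      ≤ 2 / μ * |s - t| := by
  rcases le_total s t with h | h
  · obtain ⟨h0, h1⟩ := log_add_div_increment hμ hs h
    rw [abs_sub_comm, abs_sub_comm s t, abs_of_nonneg h0, abs_of_nonneg (sub_nonneg.2 h)]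
    exact h1
  · obtain ⟨h0, h1⟩ := log_add_div_increment hμ ht h
    rw [abs_of_nonneg h0, abs_of_nonneg (sub_nonneg.2 h)]
    exact h1

/-- For `w ≥ 0`, `μ > 0`, the derivative `φ'(t) = -w·(log(t+μ) + t/(t+μ))` of the
single-coordinate term of the smoothed weighted entropy is `(2w/μ)`-Lipschitz on
`[0, ∞)`; in particular each gradient component of `H_{w,μ}` is coordinatewise
Lipschitz with constant `2W/μ`, `W := max_i w i`, on the nonnegative orthant. -/
theorem smoothed_weighted_entropy_smooth {I : Type*} [Fintype I] [Nonempty I]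
    (w : I → ℝ) (hw : ∀ i, 0 ≤ w i) (μ : ℝ) (hμ : 0 < μ) :
    (∀ (c : ℝ), 0 ≤ c → ∀ s t : ℝ, 0 ≤ s → 0 ≤ t →
      |(-(c * (Real.log (s + μ) + s / (s + μ))))
          - (-(c * (Real.log (t + μ) + t / (t + μ))))|
        ≤ (2 * c / μ) * |s - t|) ∧
    (∀ (l l' : I → ℝ), (∀ i, 0 ≤ l i) → (∀ i, 0 ≤ l' i) → ∀ i,
      |(-(w i * (Real.log (l i + μ) + l i / (l i + μ))))
          - (-(w i * (Real.log (l' i + μ) + l' i / (l' i + μ))))|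
        ≤ (2 * (Finset.univ.sup' Finset.univ_nonempty w) / μ) * |l i - l' i|) := by
  have key : ∀ (c : ℝ), 0 ≤ c → ∀ s t : ℝ, 0 ≤ s → 0 ≤ t →
      |(-(c * (Real.log (s + μ) + s / (s + μ))))
          - (-(c * (Real.log (t + μ) + t / (t + μ))))|
        ≤ (2 * c / μ) * |s - t| := by
    intro c hc s t hs ht
    rw [neg_sub_neg, ← mul_sub, abs_mul, abs_of_nonneg hc, abs_sub_comm]
    calc c * |(Real.log (s + μ) + s / (s + μ)) - (Real.log (t + μ) + t / (t + μ))|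
        ≤ c * (2 / μ * |s - t|) :=
          mul_le_mul_of_nonneg_left (abs_log_add_div_sub_le hμ hs ht) hc
      _ = (2 * c / μ) * |s - t| := by ring
  refine ⟨key, fun l l' hl hl' i => (key (w i) (hw i) _ _ (hl i) (hl' i)).trans ?_⟩
  have hi : w i ≤ Finset.univ.sup' Finset.univ_nonempty w := Finset.le_sup' w (Finset.mem_univ i)
  gcongr
end

section
/- Let I be a finite index set, μ ∈ (0, 1/e], and λ : I → ℝ with 0 ≤ λ(i) and λ(i) + μ ≤ 1/e for every i. Let w, ŵ, b : I → ℝ satisfy 0 ≤ w(i) ≤ ŵ(i) ≤ w(i) + b(i) for all i. Then for every i, the gradient components of the smoothed weighted entropies satisfy the sandwich −w(i)·(log(λ(i) + μ) + λ(i)/(λ(i) + μ)) ≤ −ŵ(i)·(log(λ(i) + μ) + λ(i)/(λ(i) + μ)) ≤ −w(i)·(log(λ(i) + μ) + λ(i)/(λ(i) + μ)) + b(i)·log(1/μ). That is, ∇H_{w,μ}(λ) ≤ ∇H_{ŵ,μ}(λ) ≤ ∇H_{w,μ}(λ) + b·log(1/μ) componentwise whenever the weights are optimistic (ŵ ≥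 w) with deviation at most b. -/
/-!
Write `g = log (l i + μ) + l i / (l i + μ)`. The two gradients differ in component `i` by
`(what i - w i) * (-g)`. The first factor lies in `[0, b i]` by the assumptions on the weights, and
the second in `[0, log (1 / μ)]`, so the product lies in `[0, b i * log (1 / μ)]`.
-/

/-- Sandwich for the gradient of the smoothed weighted entropy under optimistic
weights: if `0 ≤ w i ≤ what i ≤ w i + b i` and `0 ≤ λ i`, `λ i + μ ≤ 1/e`, then
componentwise `∇H_{w,μ}(λ) ≤ ∇H_{what,μ}(λ) ≤ ∇H_{w,μ}(λ) + b·log(1/μ)`. -/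
theorem optimistic_gradient_sandwich {I : Type*} [Fintype I]
    (μ : ℝ) (hμ0 : 0 < μ) (hμe : μ ≤ 1 / Real.exp 1)
    (l : I → ℝ) (hl0 : ∀ i, 0 ≤ l i) (hle : ∀ i, l i + μ ≤ 1 / Real.exp 1)
    (w what b : I → ℝ) (hw : ∀ i, 0 ≤ w i) (hwle : ∀ i, w i ≤ what i)
    (hwub : ∀ i, what i ≤ w i + b i) :
    ∀ i, -(w i * (Real.log (l i + μ) + l i / (l i + μ)))
          ≤ -(what i * (Real.log (l i + μ) + l i / (l i + μ))) ∧
      -(what i * (Real.log (l i + μ) + l i / (l i + μ)))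
          ≤ -(w i * (Real.log (l i + μ) + l i / (l i + μ)))
            + b i * Real.log (1 / μ) := by
  intro i
  have hs : 0 < l i + μ := add_pos_of_nonneg_of_pos (hl0 i) hμ0
  set g := Real.log (l i + μ) + l i / (l i + μ) with hg
  -- The logarithm is at most `-1` since `l i + μ ≤ 1 / e`, and the fraction is at most `1`.
  have hg_nonpos : g ≤ 0 := by
    have h1 : Real.log (l i + μ) ≤ -1 := by
      have h := Real.log_le_log hs (hle i)
      rwa [one_div, Real.log_inv, Real.log_exp] at h
    have h2 : l i / (l i + μ) ≤ 1 := (div_le_one hs).2 (by linarith)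
    linarith
  have hg_lower : -g ≤ Real.log (1 / μ) := by
    have h1 : Real.log μ ≤ Real.log (l i + μ) :=
      Real.log_le_log hμ0 (by linarith [hl0 i])
    have h2 : 0 ≤ l i / (l i + μ) := div_nonneg (hl0 i) hs.le
    rw [one_div, Real.log_inv]
    linarith
  have hd : 0 ≤ what i - w i := sub_nonneg.2 (hwle i)
  have hb : what i - w i ≤ b i := by linarith [hwub i]
  have hlow : 0 ≤ (what i - w i) * -g := mul_nonneg hd (neg_nonneg.2 hg_nonpos)
  have hupp : (what i - w i) * -g ≤ b i * Real.log (1 / μ) :=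
    mul_le_mul hb hg_lower (neg_nonneg.2 hg_nonpos) (hd.trans hb)
  constructor <;> linarith
end
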